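/- arXiv:1502.02529 — 4 statements merged into one kernel-verified Lean document; each statement's English description precedes it below -/
import Mathlib

section
/- Let ω ∈ ℝ with 4ω − 1 ≠ 0, 3ω − 1 ≠ 0, ω ≠ 1, and D(ω) ≥ 0, where D(ω) = (ω−1)²(4ω−1)² + 12(4ω−1)(ω−1/3)². Define, for either choice of sign ±: b₃ = ω, b₁^± = (1−ω)/2 ∓ √(D(ω))/(2(4ω−1)), a₂ = (4ω−1)/(2(3ω−1)), a₃^± = (1/2 − b₁^±·a₂)/(1−ω), a₁^± = 1 − a₂ − a₃^±, and b₂^± = 1 − b₁^± − ω. Then the six numbers (a₁^±, a₂, a₃^±, b₁^±, b₂^±, b₃) satisfy all five of the third-order splitting conditions for p = 3: a₁+a₂+a₃ = 1, b₁+b₂+b₃ = 1, a₂b₁ + a₃(b₁+b₂) = 1/2, a₂b₁² + a₃(b₁+b₂)² = 1/3, and b₁a₁² + b₂(a₁+a₂)² + b₃ = 1/3. -/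
open Real

/-!
Take the two consistency conditions and the second-order condition for granted and write `ω = b₃`,
so that `b₁ + b₂ = 1 - ω`. The third-order condition on the partial sums of `b` then reads
`a₂ b₁ b₂ = (1 - 3ω) / 6`. Summation by parts gives the mean of the partial sums of `a` with
weights `b`, and since a second moment is a squared mean plus a variance, the other third-order
condition reads `a₂² b₁ b₂ = (1 - 4ω) / 12`. The quotient of the two is the formula for `a₂`. What
remains is the value of `b₁ b₂`, which makes `b₁` a root of
`(4ω - 1) x² - (4ω - 1)(1 - ω) x - 3(ω - 1/3)²`, and `D` is the discriminant of this quadratic.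
-/

section CommRing

variable {R : Type*} [CommRing R] {a₁ a₂ a₃ b₁ b₂ b₃ m n : R}

theorem add_mul_weighted_sq_add_sq (v w x y : R) :
    (v + w) * (v * x ^ 2 + w * y ^ 2) = (v * x + w * y) ^ 2 + v * w * (y - x) ^ 2 := by
  ring

theorem secondOrder_splitting_dual (ha : a₁ + a₂ + a₃ = 1) (hb : b₁ + b₂ + b₃ = 1)
    (hm : a₂ * b₁ + a₃ * (b₁ + b₂) = m) :
    b₁ * a₁ + b₂ * (a₁ + a₂) + b₃ = 1 - m := by
  linear_combination (b₁ + b₂) * ha + hb - hm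

theorem thirdOrder_splitting_iff (hm : a₂ * b₁ + a₃ * (b₁ + b₂) = m) :
    a₂ * b₁ ^ 2 + a₃ * (b₁ + b₂) ^ 2 = n ↔ a₂ * (b₁ * b₂) = (b₁ + b₂) * m - n :=
  ⟨fun h => by linear_combination (b₁ + b₂) * hm - h,
    fun h => by linear_combination (b₁ + b₂) * hm - h⟩

theorem thirdOrder_splitting_dual_iff [NoZeroDivisors R] (ha : a₁ + a₂ + a₃ = 1)
    (hb : b₁ + b₂ + b₃ = 1) (hm : a₂ * b₁ + a₃ * (b₁ + b₂) = m) (hb₁₂ : b₁ + b₂ ≠ 0) :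
    b₁ * a₁ ^ 2 + b₂ * (a₁ + a₂) ^ 2 + b₃ = n ↔
      a₂ ^ 2 * (b₁ * b₂) = (b₁ + b₂) * (n - b₃) - (1 - m - b₃) ^ 2 := by
  have hmean : b₁ * a₁ + b₂ * (a₁ + a₂) = 1 - m - b₃ :=
    eq_sub_of_add_eq (secondOrder_splitting_dual ha hb hm)
  have hvar := add_mul_weighted_sq_add_sq b₁ b₂ a₁ (a₁ + a₂)
  rw [hmean, add_sub_cancel_left] at hvar
  rw [← eq_sub_iff_add_eq, ← mul_right_inj' hb₁₂, hvar, eq_sub_iff_add_eq', mul_comm (a₂ ^ 2)]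

end CommRing

section Field

variable {K : Type*} [Field K] [NeZero (2 : K)] {ω s : K}

theorem thirdOrder_splitting_b₁_mul_b₂ {b₁ : K} (h4 : 4 * ω - 1 ≠ 0)
    (hs : s ^ 2 = (ω - 1) ^ 2 * (4 * ω - 1) ^ 2 + 12 * (4 * ω - 1) * (ω - 1 / 3) ^ 2)
    (hb₁ : b₁ = (1 - ω) / 2 - s / (2 * (4 * ω - 1))) :
    (4 * ω - 1) * (b₁ * (1 - b₁ - ω)) = -3 * (ω - 1 / 3) ^ 2 := by
  have hdiscrim :
      discrim (4 * ω - 1) (-((4 * ω - 1) * (1 - ω))) (-3 * (ω - 1 / 3) ^ 2) = s * s := by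
    rw [discrim]
    linear_combination -hs
  have hroot := (quadratic_eq_zero_iff h4 hdiscrim b₁).2 <| .inr <| by
    rw [hb₁, ← mul_div_mul_left (1 - ω) 2 h4, mul_comm (4 * ω - 1) 2, ← sub_div, neg_neg]
  linear_combination -hroot

theorem thirdOrder_splitting_a₂_mul_of_b₁_mul_b₂ [NeZero (3 : K)] {p : K} (h3 : 3 * ω - 1 ≠ 0)
    (hp : (4 * ω - 1) * p = -3 * (ω - 1 / 3) ^ 2) :
    (4 * ω - 1) / (2 * (3 * ω - 1)) * p = (1 - ω) * (1 / 2) - 1 / 3 := by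
  have hthree : (3 : K) ≠ 0 := NeZero.ne 3
  rw [div_mul_eq_mul_div, hp, div_eq_iff (mul_ne_zero two_ne_zero h3)]
  field_simp
  ring

theorem thirdOrder_splitting_a₂_sq_mul_of_b₁_mul_b₂ [NeZero (3 : K)] {p : K} (h3 : 3 * ω - 1 ≠ 0)
    (hp : (4 * ω - 1) * p = -3 * (ω - 1 / 3) ^ 2) :
    ((4 * ω - 1) / (2 * (3 * ω - 1))) ^ 2 * p =
      (1 - ω) * (1 / 3 - ω) - (1 - 1 / 2 - ω) ^ 2 := by
  have hthree : (3 : K) ≠ 0 := NeZero.ne 3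
  rw [pow_two, mul_assoc, thirdOrder_splitting_a₂_mul_of_b₁_mul_b₂ h3 hp, div_mul_eq_mul_div,
    div_eq_iff (mul_ne_zero two_ne_zero h3)]
  field_simp
  ring

theorem thirdOrder_splitting_parametrization_general [NeZero (3 : K)]
    (h4 : 4 * ω - 1 ≠ 0) (h3 : 3 * ω - 1 ≠ 0) (h1 : ω ≠ 1)
    (hs : s ^ 2 = (ω - 1) ^ 2 * (4 * ω - 1) ^ 2 + 12 * (4 * ω - 1) * (ω - 1 / 3) ^ 2) :
    let b₃ : K := ω
    let b₁ : K := (1 - ω) / 2 - s / (2 * (4 * ω - 1))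
    let a₂ : K := (4 * ω - 1) / (2 * (3 * ω - 1))
    let a₃ : K := (1 / 2 - b₁ * a₂) / (1 - ω)
    let a₁ : K := 1 - a₂ - a₃
    let b₂ : K := 1 - b₁ - ω
    a₁ + a₂ + a₃ = 1 ∧ b₁ + b₂ + b₃ = 1 ∧
    a₂ * b₁ + a₃ * (b₁ + b₂) = 1 / 2 ∧
    a₂ * b₁ ^ 2 + a₃ * (b₁ + b₂) ^ 2 = 1 / 3 ∧
    b₁ * a₁ ^ 2 + b₂ * (a₁ + a₂) ^ 2 + b₃ = 1 / 3 := by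
  intro b₃ b₁ a₂ a₃ a₁ b₂
  have h1' : 1 - ω ≠ 0 := sub_ne_zero.2 h1.symm
  have hb₁₂ : b₁ + b₂ = 1 - ω := by ring
  have ha : a₁ + a₂ + a₃ = 1 := by ring
  have hb : b₁ + b₂ + b₃ = 1 := by ring
  have hm : a₂ * b₁ + a₃ * (b₁ + b₂) = 1 / 2 := by
    rw [hb₁₂, div_mul_cancel₀ _ h1']
    ring
  have hbb : (4 * ω - 1) * (b₁ * b₂) = -3 * (ω - 1 / 3) ^ 2 :=
    thirdOrder_splitting_b₁_mul_b₂ h4 hs rfl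
  refine ⟨ha, hb, hm, (thirdOrder_splitting_iff hm).2 ?_,
    (thirdOrder_splitting_dual_iff ha hb hm (hb₁₂ ▸ h1')).2 ?_⟩
  · rw [hb₁₂, thirdOrder_splitting_a₂_mul_of_b₁_mul_b₂ h3 hbb]
  · rw [hb₁₂, thirdOrder_splitting_a₂_sq_mul_of_b₁_mul_b₂ h3 hbb]

end Field

/-- The two branches (`σ = 1` and `σ = −1`) of the explicit parametrization of
third-order `p = 3` splitting coefficients by the free parameter `ω = b₃`
satisfy all five third-order splitting conditions. -/
theorem thirdOrder_splitting_parametrization (ω σ : ℝ)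
    (hσ : σ = 1 ∨ σ = -1)
    (h4 : 4 * ω - 1 ≠ 0) (h3 : 3 * ω - 1 ≠ 0) (h1 : ω ≠ 1)
    (hD : 0 ≤ (ω - 1) ^ 2 * (4 * ω - 1) ^ 2 +
        12 * (4 * ω - 1) * (ω - 1 / 3) ^ 2) :
    let D : ℝ := (ω - 1) ^ 2 * (4 * ω - 1) ^ 2 +
      12 * (4 * ω - 1) * (ω - 1 / 3) ^ 2
    let b₃ : ℝ := ω
    let b₁ : ℝ := (1 - ω) / 2 - σ * Real.sqrt D / (2 * (4 * ω - 1))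
    let a₂ : ℝ := (4 * ω - 1) / (2 * (3 * ω - 1))
    let a₃ : ℝ := (1 / 2 - b₁ * a₂) / (1 - ω)
    let a₁ : ℝ := 1 - a₂ - a₃
    let b₂ : ℝ := 1 - b₁ - ω
    a₁ + a₂ + a₃ = 1 ∧ b₁ + b₂ + b₃ = 1 ∧
    a₂ * b₁ + a₃ * (b₁ + b₂) = 1 / 2 ∧
    a₂ * b₁ ^ 2 + a₃ * (b₁ + b₂) ^ 2 = 1 / 3 ∧
    b₁ * a₁ ^ 2 + b₂ * (a₁ + a₂) ^ 2 + b₃ = 1 / 3 :=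
  thirdOrder_splitting_parametrization_general h4 h3 h1 <| by
    rw [mul_pow, sq_eq_one_iff.2 hσ, one_mul, Real.sq_sqrt hD]
end

section
/- Define D(ω) = (ω−1)²(4ω−1)² + 12(4ω−1)(ω−1/3)² and the cubic P(ω) = (ω−1)²(4ω−1) + 12(ω−1/3)², so that D(ω) = (4ω−1)·P(ω). Then: (i) D(ω) ≥ 0 for all ω ≥ 1/4; (ii) P has exactly one real root ω*, and ω* ∈ (−1.22, −1.21); (iii) for ω < 1/4, D(ω) ≥ 0 if and only if ω ≤ ω*. Consequently D(ω) ≥ 0 precisely when ω ≥ 1/4 or ω ≤ ω*. -/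
/-!
Expanding gives `P(ω) = 4ω³ + 3ω² - 2ω + 1/3`, whose discriminant is `-64`. Dividing a cubic by
`ω - r` at a root `r` leaves a quadratic `q` with `disc P = disc q * q(r)²`, so a negative
discriminant forces `q` to have no real root: `P(ω)` has the sign of `ω - r`. The sign of
`D = (4ω - 1) P` then follows, and the intermediate value theorem locates `r`.
-/

section NegativeDiscriminant

lemma eval_cubic {R : Type*} [CommSemiring R] (P : Cubic R) (x : R) :
    P.toPoly.eval x = P.a * x ^ 3 + P.b * x ^ 2 + P.c * x + P.d := by
  simp [Cubic.toPoly]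

variable {R : Type*} [CommRing R]

lemma eval_cubic_eq_sub_mul_of_isRoot {P : Cubic R} {r : R} (hr : P.toPoly.IsRoot r) (x : R) :
    P.toPoly.eval x =
      (x - r) * (P.a * (x * x) + (P.a * r + P.b) * x + (P.a * r ^ 2 + P.b * r + P.c)) := by
  rw [Polynomial.IsRoot.def, eval_cubic] at hr
  rw [eval_cubic]
  linear_combination hr

lemma cubic_discr_eq_discrim_mul_sq_of_isRoot {P : Cubic R} {r : R} (hr : P.toPoly.IsRoot r) :
    P.discr = discrim P.a (P.a * r + P.b) (P.a * r ^ 2 + P.b * r + P.c) *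
      P.toPoly.derivative.eval r ^ 2 := by
  have hd : P.d = -(P.a * r ^ 3 + P.b * r ^ 2 + P.c * r) := by
    rw [Polynomial.IsRoot.def, eval_cubic] at hr
    linear_combination hr
  have hderiv : P.toPoly.derivative.eval r = 3 * P.a * r ^ 2 + 2 * P.b * r + P.c := by
    simp only [Cubic.toPoly, Polynomial.derivative_add, Polynomial.derivative_C_mul,
      Polynomial.derivative_C, Polynomial.derivative_X_pow, Polynomial.derivative_X,
      Polynomial.eval_add, Polynomial.eval_mul, Polynomial.eval_C, Polynomial.eval_pow,
      Polynomial.eval_X, Polynomial.eval_one, Polynomial.eval_zero]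
    push_cast
    ring
  rw [hderiv, Cubic.discr, discrim, hd]
  ring

variable [LinearOrder R] [IsStrictOrderedRing R]

lemma sign_quadratic_of_discrim_neg {a b c : R} (h : discrim a b c < 0) (x : R) :
    SignType.sign (a * (x * x) + b * x + c) = SignType.sign a := by
  have completed_square :
      4 * (a * (a * (x * x) + b * x + c)) = (2 * a * x + b) ^ 2 - discrim a b c := by
    rw [discrim]
    ring
  have same_sign : 0 < a * (a * (x * x) + b * x + c) := by
    linarith [sq_nonneg (2 * a * x + b)]
  rcases mul_pos_iff.mp same_sign with ⟨ha, hq⟩ | ⟨ha, hq⟩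
  · rw [sign_pos ha, sign_pos hq]
  · rw [sign_neg ha, sign_neg hq]

theorem sign_eval_cubic_of_discr_neg {P : Cubic R} {r : R} (hr : P.toPoly.IsRoot r)
    (h : P.discr < 0) (x : R) :
    SignType.sign (P.toPoly.eval x) = SignType.sign (x - r) * SignType.sign P.a := by
  rw [cubic_discr_eq_discrim_mul_sq_of_isRoot hr] at h
  rw [eval_cubic_eq_sub_mul_of_isRoot hr, sign_mul,
    sign_quadratic_of_discrim_neg (neg_of_mul_neg_left h (sq_nonneg _))]

end NegativeDiscriminant

section OrderedField

variable {K : Type*} [Field K]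

/-- The discriminant `D(ω)` of the third-order splitting conditions, with `ω = b₃`. -/
def splittingDiscriminant (ω : K) : K :=
  (ω - 1) ^ 2 * (4 * ω - 1) ^ 2 + 12 * (4 * ω - 1) * (ω - 1 / 3) ^ 2

variable (K) in
/-- The cofactor `P(ω)` of `4ω - 1` in `splittingDiscriminant`, given by its expanded
coefficients so that `Cubic.discr` applies. -/
def splittingCubic : Cubic K :=
  ⟨4, 3, -2, 1 / 3⟩

variable [LinearOrder K] [IsStrictOrderedRing K]

lemma eval_splittingCubic (ω : K) :
    (splittingCubic K).toPoly.eval ω = (ω - 1) ^ 2 * (4 * ω - 1) + 12 * (ω - 1 / 3) ^ 2 := by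
  simp only [eval_cubic, splittingCubic]
  ring

lemma discr_splittingCubic : (splittingCubic K).discr = -64 := by
  norm_num [splittingCubic, Cubic.discr]

lemma splittingDiscriminant_eq_mul (ω : K) :
    splittingDiscriminant ω = (4 * ω - 1) * (splittingCubic K).toPoly.eval ω := by
  rw [eval_splittingCubic, splittingDiscriminant]
  ring

lemma splittingDiscriminant_nonneg {ω : K} (hω : 1 / 4 ≤ ω) : 0 ≤ splittingDiscriminant ω := by
  have : 0 ≤ 4 * ω - 1 := by linarith
  unfold splittingDiscriminant
  positivity

lemma sign_eval_splittingCubic {r : K} (hr : (splittingCubic K).toPoly.IsRoot r) (ω : K) :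
    SignType.sign ((splittingCubic K).toPoly.eval ω) = SignType.sign (ω - r) := by
  have discr_neg : (splittingCubic K).discr < 0 := by norm_num [discr_splittingCubic]
  have leadingCoeff_pos : 0 < (splittingCubic K).a := by norm_num [splittingCubic]
  rw [sign_eval_cubic_of_discr_neg hr discr_neg, sign_pos leadingCoeff_pos, mul_one]

lemma eval_splittingCubic_eq_zero_iff {r : K} (hr : (splittingCubic K).toPoly.IsRoot r) (ω : K) :
    (splittingCubic K).toPoly.eval ω = 0 ↔ ω = r := by
  rw [← sign_eq_zero_iff, sign_eval_splittingCubic hr, sign_eq_zero_iff, sub_eq_zero]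

lemma eval_splittingCubic_nonpos_iff {r : K} (hr : (splittingCubic K).toPoly.IsRoot r) (ω : K) :
    (splittingCubic K).toPoly.eval ω ≤ 0 ↔ ω ≤ r := by
  rw [← sign_nonpos_iff, sign_eval_splittingCubic hr, sign_nonpos_iff, sub_nonpos]

lemma splittingDiscriminant_nonneg_iff_of_lt {r : K} (hr : (splittingCubic K).toPoly.IsRoot r)
    {ω : K} (hω : ω < 1 / 4) : 0 ≤ splittingDiscriminant ω ↔ ω ≤ r := by
  have factor_neg : 4 * ω - 1 < 0 := by linarith
  rw [splittingDiscriminant_eq_mul, ← eval_splittingCubic_nonpos_iff hr, ← neg_mul_neg,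
    mul_nonneg_iff_of_pos_left (neg_pos.mpr factor_neg), neg_nonneg]

lemma splittingDiscriminant_nonneg_iff {r : K} (hr : (splittingCubic K).toPoly.IsRoot r) (ω : K) :
    0 ≤ splittingDiscriminant ω ↔ 1 / 4 ≤ ω ∨ ω ≤ r := by
  rcases le_or_gt (1 / 4) ω with h | h
  · simp only [splittingDiscriminant_nonneg h, h, true_or]
  · rw [splittingDiscriminant_nonneg_iff_of_lt hr h, or_iff_right h.not_ge]

end OrderedField

lemma exists_isRoot_splittingCubic :
    ∃ r ∈ Set.Ioo (-1.22 : ℝ) (-1.21), (splittingCubic ℝ).toPoly.IsRoot r := by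
  have sign_change : (0 : ℝ) ∈ Set.Ioo ((splittingCubic ℝ).toPoly.eval (-1.22))
      ((splittingCubic ℝ).toPoly.eval (-1.21)) := by
    simp only [eval_splittingCubic]
    constructor <;> norm_num
  exact intermediate_value_Ioo (by norm_num)
    (splittingCubic ℝ).toPoly.continuousOn sign_change

/-- Sign analysis of the discriminant
`D(ω) = (ω−1)²(4ω−1)² + 12(4ω−1)(ω−1/3)² = (4ω−1)·P(ω)` with
`P(ω) = (ω−1)²(4ω−1) + 12(ω−1/3)²`: `D ≥ 0` on `[1/4, ∞)`, the cubic `P` has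
a unique real root `ω* ∈ (−1.22, −1.21)`, for `ω < 1/4` one has `D(ω) ≥ 0`
iff `ω ≤ ω*`, and consequently `D(ω) ≥ 0` iff `ω ≥ 1/4` or `ω ≤ ω*`. -/
theorem discriminant_sign_analysis :
    let D : ℝ → ℝ := fun ω =>
      (ω - 1) ^ 2 * (4 * ω - 1) ^ 2 + 12 * (4 * ω - 1) * (ω - 1 / 3) ^ 2
    let P : ℝ → ℝ := fun ω =>
      (ω - 1) ^ 2 * (4 * ω - 1) + 12 * (ω - 1 / 3) ^ 2
    (∀ ω : ℝ, D ω = (4 * ω - 1) * P ω) ∧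
    (∀ ω : ℝ, 1 / 4 ≤ ω → 0 ≤ D ω) ∧
    ∃ ωstar : ℝ,
      (∀ ω : ℝ, P ω = 0 ↔ ω = ωstar) ∧
      (-1.22 < ωstar ∧ ωstar < -1.21) ∧
      (∀ ω : ℝ, ω < 1 / 4 → (0 ≤ D ω ↔ ω ≤ ωstar)) ∧
      (∀ ω : ℝ, 0 ≤ D ω ↔ (1 / 4 ≤ ω ∨ ω ≤ ωstar)) := by
  intro D P
  have hP (ω : ℝ) : P ω = (splittingCubic ℝ).toPoly.eval ω := (eval_splittingCubic ω).symm
  obtain ⟨r, r_mem, hr⟩ := exists_isRoot_splittingCubic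
  simp only [hP]
  exact ⟨splittingDiscriminant_eq_mul, fun _ ↦ splittingDiscriminant_nonneg, r,
    eval_splittingCubic_eq_zero_iff hr, r_mem,
    fun _ ↦ splittingDiscriminant_nonneg_iff_of_lt hr, splittingDiscriminant_nonneg_iff hr⟩
end

section
/- Let ω = 1/(2 − 2^{1/3}) and set a₁ = ω/2, a₂ = (1−ω)/2, a₃ = (1−ω)/2, a₄ = ω/2 and b₁ = ω, b₂ = 1−2ω, b₃ = ω, b₄ = 0. Then these coefficients satisfy all the first-, second-, and third-order splitting conditions for p = 4: Σ a_j = Σ b_j = 1, Σ_{j=2}^{4} a_j(Σ_{k<j} b_k) = Σ_{j=1}^{4} b_j(Σ_{k≤j} a_k) = 1/2, and Σ_{j=2}^{4} a_j(Σ_{k<j} b_k)² = Σ_{j=1}^{4} b_j(Σ_{k≤j} a_k)² = 1/3. (These are the coefficients of the symmetric fourth-order scheme S_U^{(4)} = A^{(ω/2)Δt} B^{ωΔt} A^{((1−ω)/2)Δt} B^{(1−2ω)Δt} A^{((1−ω)/2)Δt} B^{ωΔt} A^{(ω/2)Δt}.) -/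
/-!
The scheme is a composition of three Strang steps `A^{h/2} B^{h} A^{h/2}` of lengths
`ω, 1 - 2ω, ω`. For any composition of Strang steps of lengths `h j`, the sums in the order
conditions are composite quadrature rules on `[0, 1]` applied to `1`, `x` and `x ^ 2`: those
weighted by the `A`-coefficients are trapezoidal rules, those weighted by the `B`-coefficients
midpoint rules. Both rules integrate `1` and `x` exactly, and on `x ^ 2` their errors are
`∑ h j ^ 3 / 6` and `-∑ h j ^ 3 / 12`. For `ω = 1 / (2 - c)` with `c ^ 3 = 2` one has
`1 - 2ω = -cω`, so the sum of cubes `2ω ^ 3 + (1 - 2ω) ^ 3 = (2 - c ^ 3) ω ^ 3` vanishes.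
-/

open Finset

section OrderConditions

variable {K : Type*} [Field K]

/-- The splitting conditions up to order three for the scheme
`B^{b (p - 1) Δt} A^{a (p - 1) Δt} ⋯ B^{b 0 Δt} A^{a 0 Δt}`. Indices start at `0`,
one less than in the usual notation, and the values of `a` and `b` from index `p` on are
irrelevant. -/
structure ThirdOrderConditions (p : ℕ) (a b : ℕ → K) : Prop where
  sum_a : ∑ j ∈ range p, a j = 1
  sum_b : ∑ j ∈ range p, b j = 1
  sum_a_mul : ∑ j ∈ range p, a j * ∑ k ∈ range j, b k = 1 / 2
  sum_b_mul : ∑ j ∈ range p, b j * ∑ k ∈ range (j + 1), a k = 1 / 2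
  sum_a_mul_sq : ∑ j ∈ range p, a j * (∑ k ∈ range j, b k) ^ 2 = 1 / 3
  sum_b_mul_sq : ∑ j ∈ range p, b j * (∑ k ∈ range (j + 1), a k) ^ 2 = 1 / 3

/-- The `A`-coefficients of the composition of Strang steps `A^{h j / 2} B^{h j} A^{h j / 2}`, in
which the adjacent half steps `A^{h j / 2}` and `A^{h (j + 1) / 2}` are merged. The
`B`-coefficients are `h` itself; a composition of `n` steps is encoded with `p = n + 1` and
`h n = 0`. -/
def strangCoeff (h : ℕ → K) : ℕ → K
  | 0 => h 0 / 2
  | j + 1 => (h j + h (j + 1)) / 2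

/-- The step lengths `ω, 1 - 2ω, ω` of the triple jump, followed by zeros. -/
def tripleJump (ω : K) : ℕ → K
  | 0 => ω
  | 1 => 1 - 2 * ω
  | 2 => ω
  | _ => 0

theorem sum_range_strangCoeff_mul (h f : ℕ → K) (n : ℕ) :
    ∑ j ∈ range (n + 1), strangCoeff h j * f j =
      ∑ j ∈ range n, h j * ((f j + f (j + 1)) / 2) + h n / 2 * f n := by
  induction n with
  | zero => simp [strangCoeff]
  | succ n ih =>
    rw [sum_range_succ, ih, sum_range_succ _ n, strangCoeff]
    ring

theorem two_mul_cube_add_cube_eq_zero {R : Type*} [CommRing R] {c ω : R} (hc : c ^ 3 = 2)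
    (hω : (2 - c) * ω = 1) :
    2 * ω ^ 3 + (1 - 2 * ω) ^ 3 = 0 :=
  calc 2 * ω ^ 3 + (1 - 2 * ω) ^ 3
      = 2 * ω ^ 3 + (-(c * ω)) ^ 3 := by rw [show 1 - 2 * ω = -(c * ω) by linear_combination -hω]
    _ = (2 - c ^ 3) * ω ^ 3 := by ring
    _ = 0 := by rw [hc, sub_self, zero_mul]

variable [NeZero (2 : K)]

theorem sum_range_succ_strangCoeff (h : ℕ → K) (n : ℕ) :
    ∑ j ∈ range (n + 1), strangCoeff h j = ∑ j ∈ range n, h j + h n / 2 := by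
  simpa using sum_range_strangCoeff_mul h 1 n

theorem sum_midpoint_id (h : ℕ → K) (n : ℕ) :
    ∑ j ∈ range n, h j * (∑ k ∈ range j, h k + h j / 2) = (∑ j ∈ range n, h j) ^ 2 / 2 := by
  induction n with
  | zero => simp
  | succ n ih =>
    rw [sum_range_succ, ih, sum_range_succ h n]
    field_simp
    ring

theorem sum_trapezoid_id (h : ℕ → K) (n : ℕ) :
    ∑ j ∈ range n, h j * ((∑ k ∈ range j, h k + ∑ k ∈ range (j + 1), h k) / 2) =
      (∑ j ∈ range n, h j) ^ 2 / 2 := by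
  rw [← sum_midpoint_id]
  refine sum_congr rfl fun j _ ↦ ?_
  rw [sum_range_succ]
  field_simp
  ring

variable [NeZero (3 : K)]

theorem sum_midpoint_sq (h : ℕ → K) (n : ℕ) :
    ∑ j ∈ range n, h j * (∑ k ∈ range j, h k + h j / 2) ^ 2 =
      (∑ j ∈ range n, h j) ^ 3 / 3 - (∑ j ∈ range n, h j ^ 3) / (3 * 2 ^ 2) := by
  induction n with
  | zero => simp
  | succ n ih =>
    rw [sum_range_succ, ih, sum_range_succ h n, sum_range_succ _ n]
    field_simp
    ring

theorem sum_trapezoid_sq (h : ℕ → K) (n : ℕ) :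
    ∑ j ∈ range n, h j * (((∑ k ∈ range j, h k) ^ 2 + (∑ k ∈ range (j + 1), h k) ^ 2) / 2) =
      (∑ j ∈ range n, h j) ^ 3 / 3 + (∑ j ∈ range n, h j ^ 3) / (3 * 2) := by
  induction n with
  | zero => simp
  | succ n ih =>
    rw [sum_range_succ, ih, sum_range_succ h n, sum_range_succ _ n]
    field_simp
    ring

theorem thirdOrderConditions_strangCoeff {h : ℕ → K} {n : ℕ} (h_last : h n = 0)
    (h_sum : ∑ j ∈ range n, h j = 1) (h_cube : ∑ j ∈ range n, h j ^ 3 = 0) :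
    ThirdOrderConditions (n + 1) (strangCoeff h) h where
  sum_a := by simp [sum_range_succ_strangCoeff, h_sum, h_last]
  sum_b := by simp [sum_range_succ, h_sum, h_last]
  sum_a_mul := by
    rw [sum_range_strangCoeff_mul, sum_trapezoid_id, h_sum, h_last]
    simp
  sum_b_mul := by
    simp only [sum_range_succ_strangCoeff]
    rw [sum_range_succ, sum_midpoint_id, h_sum, h_last]
    simp
  sum_a_mul_sq := by
    rw [sum_range_strangCoeff_mul h (fun j ↦ (∑ k ∈ range j, h k) ^ 2), sum_trapezoid_sq, h_sum,
      h_cube, h_last]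
    simp
  sum_b_mul_sq := by
    simp only [sum_range_succ_strangCoeff]
    rw [sum_range_succ, sum_midpoint_sq, h_sum, h_cube, h_last]
    simp

theorem thirdOrderConditions_tripleJump {ω : K} (hω : 2 * ω ^ 3 + (1 - 2 * ω) ^ 3 = 0) :
    ThirdOrderConditions 4 (strangCoeff (tripleJump ω)) (tripleJump ω) := by
  refine thirdOrderConditions_strangCoeff rfl ?_ ?_
  · simp only [sum_range_succ, sum_range_zero, tripleJump]
    ring
  · simp only [sum_range_succ, sum_range_zero, tripleJump]
    linear_combination hω

theorem two_sub_ne_zero_of_cube_eq_two {c : K} (hc : c ^ 3 = 2) : 2 - c ≠ 0 := by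
  intro h
  have h_six : (2 * 3 : K) = 0 := by
    rw [← sub_eq_zero.mp h] at hc
    linear_combination hc
  exact mul_ne_zero two_ne_zero three_ne_zero h_six

theorem SU4_satisfies_third_order_conditions_general {c : K} (hc : c ^ 3 = 2) :
    let ω : K := 1 / (2 - c)
    let a₁ : K := ω / 2
    let a₂ : K := (1 - ω) / 2
    let a₃ : K := (1 - ω) / 2
    let a₄ : K := ω / 2
    let b₁ : K := ω
    let b₂ : K := 1 - 2 * ω
    let b₃ : K := ω
    let b₄ : K := 0
    (a₁ + a₂ + a₃ + a₄ = 1 ∧ b₁ + b₂ + b₃ + b₄ = 1) ∧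
    (a₂ * b₁ + a₃ * (b₁ + b₂) + a₄ * (b₁ + b₂ + b₃) = 1 / 2 ∧
      b₁ * a₁ + b₂ * (a₁ + a₂) + b₃ * (a₁ + a₂ + a₃) +
        b₄ * (a₁ + a₂ + a₃ + a₄) = 1 / 2) ∧
    (a₂ * b₁ ^ 2 + a₃ * (b₁ + b₂) ^ 2 + a₄ * (b₁ + b₂ + b₃) ^ 2 = 1 / 3 ∧
      b₁ * a₁ ^ 2 + b₂ * (a₁ + a₂) ^ 2 + b₃ * (a₁ + a₂ + a₃) ^ 2 +
        b₄ * (a₁ + a₂ + a₃ + a₄) ^ 2 = 1 / 3) := by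
  intro ω a₁ a₂ a₃ a₄ b₁ b₂ b₃ b₄
  have hω : (2 - c) * ω = 1 := mul_one_div_cancel (two_sub_ne_zero_of_cube_eq_two hc)
  have ha₁ : strangCoeff (tripleJump ω) 0 = a₁ := rfl
  have ha₂ : strangCoeff (tripleJump ω) 1 = a₂ := by
    simp only [strangCoeff, tripleJump, a₂]
    ring
  have ha₃ : strangCoeff (tripleJump ω) 2 = a₃ := by
    simp only [strangCoeff, tripleJump, a₃]
    ring
  have ha₄ : strangCoeff (tripleJump ω) 3 = a₄ := by
    simp only [strangCoeff, tripleJump, a₄, add_zero]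
  obtain ⟨sum_a, sum_b, sum_a_mul, sum_b_mul, sum_a_mul_sq, sum_b_mul_sq⟩ :=
    thirdOrderConditions_tripleJump (two_mul_cube_add_cube_eq_zero hc hω)
  simp only [sum_range_succ, sum_range_zero, zero_add, ha₁, ha₂, ha₃, ha₄, tripleJump, mul_zero,
    zero_pow two_ne_zero] at sum_a sum_b sum_a_mul sum_b_mul sum_a_mul_sq sum_b_mul_sq
  exact ⟨⟨sum_a, sum_b⟩, ⟨sum_a_mul, sum_b_mul⟩, sum_a_mul_sq, sum_b_mul_sq⟩

end OrderConditions

theorem two_rpow_one_third_cube : ((2 : ℝ) ^ ((1 : ℝ) / 3)) ^ 3 = 2 := by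
  rw [one_div]
  exact Real.rpow_inv_natCast_pow zero_le_two three_ne_zero

/-- The coefficients of the symmetric fourth-order scheme
`S_U^{(4)} = A^{(ω/2)Δt} B^{ωΔt} A^{((1−ω)/2)Δt} B^{(1−2ω)Δt}
A^{((1−ω)/2)Δt} B^{ωΔt} A^{(ω/2)Δt}` with `ω = 1/(2 − 2^{1/3})` satisfy all
the first-, second-, and third-order splitting conditions for `p = 4`. -/
theorem SU4_satisfies_third_order_conditions :
    let ω : ℝ := 1 / (2 - (2 : ℝ) ^ ((1 : ℝ) / 3))
    let a₁ : ℝ := ω / 2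
    let a₂ : ℝ := (1 - ω) / 2
    let a₃ : ℝ := (1 - ω) / 2
    let a₄ : ℝ := ω / 2
    let b₁ : ℝ := ω
    let b₂ : ℝ := 1 - 2 * ω
    let b₃ : ℝ := ω
    let b₄ : ℝ := 0
    (a₁ + a₂ + a₃ + a₄ = 1 ∧ b₁ + b₂ + b₃ + b₄ = 1) ∧
    (a₂ * b₁ + a₃ * (b₁ + b₂) + a₄ * (b₁ + b₂ + b₃) = 1 / 2 ∧
      b₁ * a₁ + b₂ * (a₁ + a₂) + b₃ * (a₁ + a₂ + a₃) +
        b₄ * (a₁ + a₂ + a₃ + a₄) = 1 / 2) ∧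
    (a₂ * b₁ ^ 2 + a₃ * (b₁ + b₂) ^ 2 + a₄ * (b₁ + b₂ + b₃) ^ 2 = 1 / 3 ∧
      b₁ * a₁ ^ 2 + b₂ * (a₁ + a₂) ^ 2 + b₃ * (a₁ + a₂ + a₃) ^ 2 +
        b₄ * (a₁ + a₂ + a₃ + a₄) ^ 2 = 1 / 3) :=
  SU4_satisfies_third_order_conditions_general two_rpow_one_third_cube
end

section
/- Let a₁, a₂, a₃, b₁, b₂, b₃ be real numbers satisfying all five third-order splitting conditions for p = 3: a₁+a₂+a₃ = 1, b₁+b₂+b₃ = 1, a₂b₁ + a₃(b₁+b₂) = 1/2, a₂b₁² + a₃(b₁+b₂)² = 1/3, and b₁a₁² + b₂(a₁+a₂)² + b₃ = 1/3. Then at least one of a₁, a₂, a₃ is strictly negative and at least one of b₁, b₂, b₃ is strictly negative. That is, every third-order three-stage operator splitting scheme necessarily takes at least one backward time step in each of the two operators. -/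
/-!
Composing the steps of the scheme traces a staircase from `(0, 0)` to `(1, 1)` whose `j`-th stage
moves by `aⱼ` horizontally and then by `bⱼ` vertically. The left-hand sides of the two third-order
conditions are the line integrals `∫ y² dx` and `∫ x² dy` along it. Since `2xy dx + x² dy` is the
exact form `d(x²y)`, the conditions give
`∫ (y - x)² dx = ∫ y² dx + ∫ x² dy - [x²y] + [x³/3] = 1/3 + 1/3 - 1 + 1/3 = 0`,
and symmetrically `∫ (y - x)² dy = 0`. Only horizontal steps contribute to the first integral and
only vertical ones to the second; steps with no backward move would make it positive.
-/

open Finset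

section Staircase

variable {R : Type*} [CommRing R]

/-- The line integral `∫ y² dx + x² dy` along the staircase that goes from `(x j, y j)`
horizontally to `(x (j + 1), y j)` and then vertically to `(x (j + 1), y (j + 1))`, for `j < p`.
When `x` and `y` are the partial sums of the coefficients of a `p`-stage splitting scheme, it is the
sum of the left-hand sides of the two third-order conditions. -/
def staircaseIntegral (x y : ℕ → R) (p : ℕ) : R :=
  ∑ j ∈ range p, ((x (j + 1) - x j) * y j ^ 2 + (y (j + 1) - y j) * x (j + 1) ^ 2)

theorem staircaseIntegral_succ (x y : ℕ → R) (p : ℕ) :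
    staircaseIntegral x y (p + 1) = staircaseIntegral x y p +
      ((x (p + 1) - x p) * y p ^ 2 + (y (p + 1) - y p) * x (p + 1) ^ 2) :=
  sum_range_succ _ p

theorem staircaseIntegral_partialSums (a b : ℕ → R) (p : ℕ) :
    staircaseIntegral (fun n ↦ ∑ k ∈ range n, a k) (fun n ↦ ∑ k ∈ range n, b k) p =
      ∑ j ∈ range p, a j * (∑ k ∈ range j, b k) ^ 2 +
        ∑ j ∈ range p, b j * (∑ k ∈ range (j + 1), a k) ^ 2 := by
  simp only [staircaseIntegral, sum_range_succ_sub_sum, sum_add_distrib]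

-- Each summand on the left is `3 ∫ (y - x)² dx` over one horizontal step.
theorem sum_horizontal_cube_sub_cube (x y : ℕ → R) (hx : x 0 = 0) (p : ℕ) :
    ∑ j ∈ range p, ((y j - x j) ^ 3 - (y j - x (j + 1)) ^ 3) =
      3 * staircaseIntegral x y p - 3 * x p ^ 2 * y p + x p ^ 3 := by
  induction p with
  | zero => simp [staircaseIntegral, hx]
  | succ p ih => rw [sum_range_succ, ih, staircaseIntegral_succ]; ring

-- Each summand on the left is `3 ∫ (y - x)² dy` over one vertical step.
theorem sum_vertical_cube_sub_cube (x y : ℕ → R) (hy : y 0 = 0) (p : ℕ) :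
    ∑ j ∈ range p, ((y (j + 1) - x (j + 1)) ^ 3 - (y j - x (j + 1)) ^ 3) =
      3 * staircaseIntegral x y p - 3 * x p * y p ^ 2 + y p ^ 3 := by
  induction p with
  | zero => simp [staircaseIntegral, hy]
  | succ p ih => rw [sum_range_succ, ih, staircaseIntegral_succ]; ring

end Staircase

theorem exists_lt_of_sum_lt_of_sum_strictMono_le {ι M N : Type*}
    [AddCommMonoid M] [LinearOrder M] [IsOrderedAddMonoid M]
    [AddCommMonoid N] [PartialOrder N] [IsOrderedCancelAddMonoid N]
    {s : Finset ι} {f : M → N} (hf : StrictMono f) {u v : ι → M}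
    (hlt : ∑ i ∈ s, v i < ∑ i ∈ s, u i) (hle : ∑ i ∈ s, f (u i) ≤ ∑ i ∈ s, f (v i)) :
    ∃ i ∈ s, u i < v i := by
  by_contra! hvu
  obtain ⟨i, hi, hvi⟩ := exists_lt_of_sum_lt hlt
  exact hle.not_gt (sum_lt_sum (fun j hj ↦ hf.monotone (hvu j hj)) ⟨i, hi, hf hvi⟩)

section BackwardSteps

variable {R : Type*} [CommRing R] [LinearOrder R] [IsStrictOrderedRing R]

theorem exists_lt_of_sum_cube_sub_cube_nonpos {ι : Type*} {s : Finset ι} {u v : ι → R}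
    (hpos : 0 < ∑ i ∈ s, (u i - v i)) (hcube : ∑ i ∈ s, (u i ^ 3 - v i ^ 3) ≤ 0) :
    ∃ i ∈ s, u i < v i := by
  rw [sum_sub_distrib] at hpos hcube
  have cube_strictMono : StrictMono fun t : R ↦ t ^ 3 := Odd.strictMono_pow (by decide)
  exact exists_lt_of_sum_lt_of_sum_strictMono_le cube_strictMono
    (sub_pos.mp hpos) (sub_nonpos.mp hcube)

theorem exists_backward_horizontal_step {x y : ℕ → R} {p : ℕ} (hx : x 0 = 0) (hxp : 0 < x p)
    (hI : 3 * staircaseIntegral x y p ≤ 3 * x p ^ 2 * y p - x p ^ 3) :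
    ∃ j < p, x (j + 1) < x j := by
  have hpos : 0 < ∑ j ∈ range p, ((y j - x j) - (y j - x (j + 1))) := by
    simpa only [sub_sub_sub_cancel_left, sum_range_sub, hx, sub_zero] using hxp
  have hcube : ∑ j ∈ range p, ((y j - x j) ^ 3 - (y j - x (j + 1)) ^ 3) ≤ 0 := by
    rw [sum_horizontal_cube_sub_cube x y hx]
    linarith
  obtain ⟨j, hj, hlt⟩ := exists_lt_of_sum_cube_sub_cube_nonpos hpos hcube
  exact ⟨j, mem_range.mp hj, (sub_lt_sub_iff_left _).mp hlt⟩

theorem exists_backward_vertical_step {x y : ℕ → R} {p : ℕ} (hy : y 0 = 0) (hyp : 0 < y p)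
    (hI : 3 * staircaseIntegral x y p ≤ 3 * x p * y p ^ 2 - y p ^ 3) :
    ∃ j < p, y (j + 1) < y j := by
  have hpos : 0 < ∑ j ∈ range p, ((y (j + 1) - x (j + 1)) - (y j - x (j + 1))) := by
    simpa only [sub_sub_sub_cancel_right, sum_range_sub, hy, sub_zero] using hyp
  have hcube : ∑ j ∈ range p, ((y (j + 1) - x (j + 1)) ^ 3 - (y j - x (j + 1)) ^ 3) ≤ 0 := by
    rw [sum_vertical_cube_sub_cube x y hy]
    linarith
  obtain ⟨j, hj, hlt⟩ := exists_lt_of_sum_cube_sub_cube_nonpos hpos hcube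
  exact ⟨j, mem_range.mp hj, (sub_lt_sub_iff_right _).mp hlt⟩

-- The coefficients of stage `j ≥ 1` are `a (j - 1)` and `b (j - 1)`; `h3` is the sum of the two
-- third-order conditions, multiplied by `3` to avoid division in `R`.
theorem thirdOrder_p3_needs_backward_steps_general (a b : ℕ → R) (p : ℕ)
    (ha : ∑ j ∈ range p, a j = 1) (hb : ∑ j ∈ range p, b j = 1)
    (h3 : 3 * (∑ j ∈ range p, a j * (∑ k ∈ range j, b k) ^ 2 +
      ∑ j ∈ range p, b j * (∑ k ∈ range (j + 1), a k) ^ 2) ≤ 2) :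
    (∃ j < p, a j < 0) ∧ (∃ j < p, b j < 0) := by
  rw [← staircaseIntegral_partialSums] at h3
  constructor
  · obtain ⟨j, hj, hlt⟩ := exists_backward_horizontal_step (sum_range_zero a)
      (by simp only [ha, zero_lt_one]) (h3.trans_eq (by simp only [ha, hb]; norm_num))
    exact ⟨j, hj, by simpa only [sum_range_succ, add_lt_iff_neg_left] using hlt⟩
  · obtain ⟨j, hj, hlt⟩ := exists_backward_vertical_step (sum_range_zero b)
      (by simp only [hb, zero_lt_one]) (h3.trans_eq (by simp only [ha, hb]; norm_num))
    exact ⟨j, hj, by simpa only [sum_range_succ, add_lt_iff_neg_left] using hlt⟩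

end BackwardSteps

/-- Every third-order three-stage operator splitting scheme necessarily takes
at least one backward time step in each of the two operators: if
`(a₁,a₂,a₃,b₁,b₂,b₃)` satisfies all five third-order `p = 3` conditions,
then at least one `aⱼ` and at least one `bⱼ` is strictly negative. -/
theorem thirdOrder_p3_needs_backward_steps (a₁ a₂ a₃ b₁ b₂ b₃ : ℝ)
    (h1a : a₁ + a₂ + a₃ = 1) (h1b : b₁ + b₂ + b₃ = 1)
    (h2 : a₂ * b₁ + a₃ * (b₁ + b₂) = 1 / 2)
    (h3a : a₂ * b₁ ^ 2 + a₃ * (b₁ + b₂) ^ 2 = 1 / 3)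
    (h3b : b₁ * a₁ ^ 2 + b₂ * (a₁ + a₂) ^ 2 + b₃ = 1 / 3) :
    (a₁ < 0 ∨ a₂ < 0 ∨ a₃ < 0) ∧ (b₁ < 0 ∨ b₂ < 0 ∨ b₃ < 0) := by
  have hneg := thirdOrder_p3_needs_backward_steps_general
    (fun | 0 => a₁ | 1 => a₂ | _ => a₃) (fun | 0 => b₁ | 1 => b₂ | _ => b₃) 3
    (by simpa [sum_range_succ] using h1a) (by simpa [sum_range_succ] using h1b)
    (by simp only [sum_range_succ, sum_range_zero, zero_add, h1a]; linarith)
  simpa only [Nat.exists_lt_succ_right, Nat.not_lt_zero, false_and, exists_false, false_or,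
    or_assoc] using hneg
end
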